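/- arXiv:1310.8060 — 2 statements merged into one kernel-verified Lean document; each statement's English description precedes it below -/
import Mathlib

section
/- Let α be an alternating p-form on Q with 2 ≤ p ≤ q. Define the L-valued alternating p-form B⁺(α) by B⁺(α)(X_1,…,X_p) = Σ_{i=1}^q Σ_{r=1}^p (−1)^{p−r} (e_i⌟α)(X_1,…,X̂_r,…,X_p)·A_{e_i}X_r (the hat denoting omission; this is Σ_i (e_i⌟α)∧A_{e_i}, where A_{e_i} is viewed as the L-valued 1-form Y ↦ A_{e_i}Y), and set |B⁺(α)|² = (1/p!)·Σ_{i_1,…,i_p=1}^q |B⁺(α)(e_{i_1},…,e_{i_p})|_L². Then |B⁺(α)|² = Σ_{i,j,k=1}^q ⟨A_{e_k}e_i, A_{e_k}e_j⟩·⟨e_i⌟α, e_j⌟α⟩ + Σ_{i,j,k,l=1}^q ⟨A_{e_i}e_l, A_{e_j}e_k⟩·⟨(e_j∧e_i)⌟α, (e_l∧e_k)⌟α⟩. -/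
/-!
On vector-valued forms, interior multiplication is adjoint to wedging with a one-form:
`⟨ω, Alt F⟩ = ∑ₖ ⟨eₖ⌟ω, F eₖ⟩` for `F` linear with values in `p`-forms. Together with the Leibniz
rule `X⌟Alt F = F X - Alt (Y ↦ X⌟F Y)` this gives
`⟨Alt F, Alt G⟩ = ∑ₖ ⟨F eₖ, G eₖ⟩ - ∑ₖ ∑ₗ ⟨eₖ⌟F eₗ, eₗ⌟G eₖ⟩`. The form `B⁺(α)` is, up to sign,
`Alt F` for `F X = ∑ᵢ (eᵢ⌟α) ⊗ A_{eᵢ}X`, and the skew-symmetry of `A` turns the two sums into those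
of the theorem.
-/

open scoped BigOperators RealInnerProductSpace

variable {Q : Type*} [NormedAddCommGroup Q] [InnerProductSpace ℝ Q]

/-- Inner product of two `p`-forms with respect to an orthonormal frame `e`:
`⟨α,β⟩ = (1/p!) ∑_{i₁,…,i_p} α(e_{i₁},…,e_{i_p}) β(e_{i₁},…,e_{i_p})`. -/
noncomputable def formInner {q p : ℕ} (e : Fin q → Q)
    (α β : AlternatingMap ℝ Q ℝ (Fin p)) : ℝ :=
  (1 / (Nat.factorial p : ℝ)) * ∑ f : Fin p → Fin q, α (e ∘ f) * β (e ∘ f)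

/-- Interior product `X ⌟ α` of a vector with a `p`-form (zero when `p = 0`).
The interior product with a decomposable `2`-vector is then `(X∧Y)⌟α = X⌟(Y⌟α)`,
i.e. `((X∧Y)⌟α)(Z₁,…) = α(Y,X,Z₁,…)`. -/
noncomputable def iprod : ∀ {p : ℕ}, Q → AlternatingMap ℝ Q ℝ (Fin p) →
    AlternatingMap ℝ Q ℝ (Fin (p - 1))
  | 0, _, _ => 0
  | _ + 1, X, α => α.curryLeft X

section Semiring

variable {R M N : Type*} [CommSemiring R] [AddCommMonoid M] [Module R M] [AddCommMonoid N]
  [Module R N]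

lemma alternatingMap_sum_apply {ι κ : Type*} (s : Finset κ) (ω : κ → M [⋀^ι]→ₗ[R] N)
    (v : ι → M) : (∑ i ∈ s, ω i) v = ∑ i ∈ s, ω i v :=
  map_sum (⟨⟨fun η ↦ η v, rfl⟩, fun _ _ ↦ rfl⟩ : M [⋀^ι]→ₗ[R] N →+ N) ω s

/-- The linear map `z ↦ β ⊗ z` from vectors to vector-valued forms, for a scalar form `β`. -/
def formTensor {ι : Type*} (β : M [⋀^ι]→ₗ[R] R) : N →ₗ[R] M [⋀^ι]→ₗ[R] N where
  toFun := β.smulRight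
  map_add' x y := by ext v; simp
  map_smul' c x := by ext v; simp [smul_comm c]

lemma curryLeft_formTensor {p : ℕ} (β : M [⋀^Fin (p + 1)]→ₗ[R] R) (z : N) (X : M) :
    (formTensor β z).curryLeft X = formTensor (β.curryLeft X) z :=
  rfl

end Semiring

section Ring

open AlternatingMap

variable {R M N : Type*} [CommRing R] [AddCommGroup M] [Module R M] [AddCommGroup N] [Module R N]
  {p : ℕ}

lemma curryLeft_alternatizeUncurryFin (F : M →ₗ[R] M [⋀^Fin (p + 1)]→ₗ[R] N) (X : M) :
    (alternatizeUncurryFin F).curryLeft X =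
      F X - alternatizeUncurryFin (curryLeftLinearMap.flip X ∘ₗ F) := by
  ext v
  have removeNth_succ_cons (t : Fin (p + 1)) :
      t.succ.removeNth (Matrix.vecCons X v) = Matrix.vecCons X (t.removeNth v) :=
    Fin.cons_comp_succ_succAbove X v t
  simp [alternatizeUncurryFin_apply, Fin.sum_univ_succ (n := p + 1), pow_succ,
    removeNth_succ_cons, sub_eq_add_neg]

/-- The wedge product `β ∧ θ` of a scalar `p`-form `β` with a vector-valued one-form `θ`. The sign
makes `θ` the last factor, whereas `alternatizeUncurryFin` inserts its linear argument first. -/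
def wedgeOneForm (β : M [⋀^Fin p]→ₗ[R] R) (θ : M →ₗ[R] N) : M [⋀^Fin (p + 1)]→ₗ[R] N :=
  (-1 : R) ^ p • alternatizeUncurryFin (formTensor β ∘ₗ θ)

lemma wedgeOneForm_apply (β : M [⋀^Fin p]→ₗ[R] R) (θ : M →ₗ[R] N) (v : Fin (p + 1) → M) :
    wedgeOneForm β θ v =
      ∑ t : Fin (p + 1), ((-1 : R) ^ (p - (t : ℕ)) * β (v ∘ t.succAbove)) • θ (v t) := by
  have sign (t : Fin (p + 1)) : (-1 : R) ^ (p - (t : ℕ)) = (-1) ^ p * (-1) ^ (t : ℕ) := by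
    rw [← pow_add]
    exact neg_one_pow_congr (by rw [Nat.even_sub t.is_le, Nat.even_add])
  have tensor_apply (t : Fin (p + 1)) :
      formTensor β (θ (v t)) (t.removeNth v) = β (v ∘ t.succAbove) • θ (v t) := rfl
  simp only [wedgeOneForm, AlternatingMap.smul_apply, alternatizeUncurryFin_apply,
    LinearMap.comp_apply, tensor_apply, Finset.smul_sum, sign,
    ← Int.cast_smul_eq_zsmul R, Int.cast_pow, Int.cast_neg, Int.cast_one, smul_smul, mul_assoc]

variable {ι : Type*} [Fintype ι]

/-- The vector-valued `(p + 1)`-form `B⁺(α) = ∑ᵢ (eᵢ⌟α) ∧ A_{eᵢ}`. -/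
def bPlus (e : ι → M) (A : M →ₗ[R] M →ₗ[R] N) (α : M [⋀^Fin (p + 1)]→ₗ[R] R) :
    M [⋀^Fin (p + 1)]→ₗ[R] N :=
  ∑ i, wedgeOneForm (α.curryLeft (e i)) (A (e i))

lemma bPlus_apply (e : ι → M) (A : M →ₗ[R] M →ₗ[R] N) (α : M [⋀^Fin (p + 1)]→ₗ[R] R)
    (v : Fin (p + 1) → M) :
    bPlus e A α v =
      ∑ i, ∑ t : Fin (p + 1), ((-1 : R) ^ (p - (t : ℕ)) * α.curryLeft (e i) (v ∘ t.succAbove)) •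
        A (e i) (v t) := by
  simp only [bPlus, alternatingMap_sum_apply, wedgeOneForm_apply]

end Ring

section FrameInner

open AlternatingMap

variable {ι M L : Type*} [Fintype ι] [AddCommGroup M] [Module ℝ M]
  [NormedAddCommGroup L] [InnerProductSpace ℝ L] {p : ℕ} (e : ι → M)

/-- The pairing `⟨ω, η⟩ = (1/p!) ∑ ⟨ω(e_{i₁},…,e_{i_p}), η(e_{i₁},…,e_{i_p})⟩` of vector-valued
`p`-forms along a finite family `e`, as a bilinear map; it extends `formInner` beyond scalar
forms. -/
noncomputable def frameInner : M [⋀^Fin p]→ₗ[ℝ] L →ₗ[ℝ] M [⋀^Fin p]→ₗ[ℝ] L →ₗ[ℝ] ℝ :=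
  LinearMap.mk₂ ℝ
    (fun ω η ↦ (1 / (p.factorial : ℝ)) * ∑ f : Fin p → ι, ⟪ω (e ∘ f), η (e ∘ f)⟫)
    (fun ω ω' η ↦ by simp [inner_add_left, Finset.sum_add_distrib, mul_add])
    (fun c ω η ↦ by simp [real_inner_smul_left, ← Finset.mul_sum, mul_left_comm])
    (fun ω η η' ↦ by simp [inner_add_right, Finset.sum_add_distrib, mul_add])
    (fun c ω η ↦ by simp [real_inner_smul_right, ← Finset.mul_sum, mul_left_comm])

lemma frameInner_apply (ω η : M [⋀^Fin p]→ₗ[ℝ] L) :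
    frameInner e ω η =
      (1 / (p.factorial : ℝ)) * ∑ f : Fin p → ι, ⟪ω (e ∘ f), η (e ∘ f)⟫ :=
  rfl

lemma frameInner_comm (ω η : M [⋀^Fin p]→ₗ[ℝ] L) : frameInner e ω η = frameInner e η ω := by
  simp only [frameInner_apply, real_inner_comm]

lemma frameInner_self (ω : M [⋀^Fin p]→ₗ[ℝ] L) :
    frameInner e ω ω = (1 / (p.factorial : ℝ)) * ∑ f : Fin p → ι, ‖ω (e ∘ f)‖ ^ 2 := by
  simp only [frameInner_apply, real_inner_self_eq_norm_sq]

lemma frameInner_formTensor (β γ : M [⋀^Fin p]→ₗ[ℝ] ℝ) (x y : L) :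
    frameInner e (formTensor β x) (formTensor γ y) = ⟪x, y⟫ * frameInner e β γ := by
  have inner_tensor (f : Fin p → ι) :
      ⟪formTensor β x (e ∘ f), formTensor γ y (e ∘ f)⟫ =
        ⟪x, y⟫ * ⟪β (e ∘ f), γ (e ∘ f)⟫ := by
    change ⟪β (e ∘ f) • x, γ (e ∘ f) • y⟫ = _
    rw [real_inner_smul_left, real_inner_smul_right, Real.inner_apply, mul_comm ⟪x, y⟫, mul_assoc]
  simp only [frameInner_apply, inner_tensor, ← Finset.mul_sum, mul_left_comm]

lemma sum_inner_neg_one_pow_smul_removeNth (ω : M [⋀^Fin (p + 1)]→ₗ[ℝ] L)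
    (F : M →ₗ[ℝ] M [⋀^Fin p]→ₗ[ℝ] L) (t : Fin (p + 1)) :
    ∑ f : Fin (p + 1) → ι,
        ⟪ω (e ∘ f), (-1) ^ (t : ℕ) • F ((e ∘ f) t) (t.removeNth (e ∘ f))⟫ =
      ∑ k, ∑ g : Fin p → ι, ⟪ω.curryLeft (e k) (e ∘ g), F (e k) (e ∘ g)⟫ := by
  rw [← (Fin.insertNthEquiv (fun _ ↦ ι) t).sum_comp, Fintype.sum_prod_type]
  refine Fintype.sum_congr _ _ fun k ↦ Fintype.sum_congr _ _ fun g ↦ ?_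
  have comp_insertNth : e ∘ t.insertNth (α := fun _ ↦ ι) k g =
      t.insertNth (α := fun _ ↦ M) (e k) (e ∘ g) := by
    rw [Fin.eq_insertNth_iff]
    constructor
    · simp
    · ext i
      simp [Fin.removeNth]
  change ⟪ω (e ∘ t.insertNth k g), (-1) ^ (t : ℕ) •
    F ((e ∘ t.insertNth k g) t) (t.removeNth (e ∘ t.insertNth k g))⟫ = _
  rw [comp_insertNth, map_insertNth, Fin.insertNth_apply_same, Fin.removeNth_insertNth,
    curryLeft_apply_apply]
  obtain sign | sign := neg_one_pow_eq_or ℤ (t : ℕ) <;> simp [sign]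

theorem frameInner_alternatizeUncurryFin_right (ω : M [⋀^Fin (p + 1)]→ₗ[ℝ] L)
    (F : M →ₗ[ℝ] M [⋀^Fin p]→ₗ[ℝ] L) :
    frameInner e ω (alternatizeUncurryFin F) =
      ∑ k, frameInner e (ω.curryLeft (e k)) (F (e k)) := by
  simp only [frameInner_apply, alternatizeUncurryFin_apply, inner_sum]
  rw [Finset.sum_comm]
  simp only [sum_inner_neg_one_pow_smul_removeNth, Finset.sum_const, Finset.card_univ,
    Fintype.card_fin, nsmul_eq_mul, ← Finset.mul_sum, Nat.factorial_succ, Nat.cast_mul]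
  field_simp

theorem frameInner_alternatizeUncurryFin_left (F : M →ₗ[ℝ] M [⋀^Fin p]→ₗ[ℝ] L)
    (ω : M [⋀^Fin (p + 1)]→ₗ[ℝ] L) :
    frameInner e (alternatizeUncurryFin F) ω =
      ∑ k, frameInner e (F (e k)) (ω.curryLeft (e k)) := by
  rw [frameInner_comm, frameInner_alternatizeUncurryFin_right]
  exact Fintype.sum_congr _ _ fun k ↦ frameInner_comm e _ _

theorem frameInner_alternatizeUncurryFin (F G : M →ₗ[ℝ] M [⋀^Fin (p + 1)]→ₗ[ℝ] L) :
    frameInner e (alternatizeUncurryFin F) (alternatizeUncurryFin G) =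
      ∑ k, frameInner e (F (e k)) (G (e k)) -
        ∑ k, ∑ l, frameInner e ((F (e l)).curryLeft (e k)) ((G (e k)).curryLeft (e l)) := by
  simp only [frameInner_alternatizeUncurryFin_right, frameInner_alternatizeUncurryFin_left,
    curryLeft_alternatizeUncurryFin, map_sub, LinearMap.sub_apply, Finset.sum_sub_distrib,
    LinearMap.comp_apply, LinearMap.flip_apply, curryLeftLinearMap_apply]

theorem frameInner_wedgeOneForm (β γ : M [⋀^Fin (p + 1)]→ₗ[ℝ] ℝ) (θ η : M →ₗ[ℝ] L) :
    frameInner e (wedgeOneForm β θ) (wedgeOneForm γ η) =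
      ∑ k, ⟪θ (e k), η (e k)⟫ * frameInner e β γ -
        ∑ k, ∑ l, ⟪θ (e l), η (e k)⟫ *
          frameInner e (β.curryLeft (e k)) (γ.curryLeft (e l)) := by
  have signs_cancel : (-1 : ℝ) ^ (p + 1) * (-1) ^ (p + 1) = 1 := by simp [← mul_pow]
  simp only [wedgeOneForm, map_smul, LinearMap.smul_apply, smul_smul, signs_cancel, one_smul,
    frameInner_alternatizeUncurryFin, LinearMap.comp_apply, curryLeft_formTensor,
    frameInner_formTensor]

theorem frameInner_bPlus_self {A : M →ₗ[ℝ] M →ₗ[ℝ] L} (hA : ∀ X Y, A X Y = -A Y X)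
    (α : M [⋀^Fin (p + 2)]→ₗ[ℝ] ℝ) :
    frameInner e (bPlus e A α) (bPlus e A α) =
      (∑ i, ∑ j, ∑ k, ⟪A (e k) (e i), A (e k) (e j)⟫ *
          frameInner e (α.curryLeft (e i)) (α.curryLeft (e j))) +
        ∑ i, ∑ j, ∑ k, ∑ l, ⟪A (e i) (e l), A (e j) (e k)⟫ *
          frameInner e ((α.curryLeft (e i)).curryLeft (e j))
            ((α.curryLeft (e k)).curryLeft (e l)) := by
  have inner_wedge (i j : ι) :
      frameInner e (wedgeOneForm (α.curryLeft (e i)) (A (e i)))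
          (wedgeOneForm (α.curryLeft (e j)) (A (e j))) =
        (∑ k, ⟪A (e k) (e i), A (e k) (e j)⟫ *
          frameInner e (α.curryLeft (e i)) (α.curryLeft (e j))) +
        ∑ k, ∑ l, ⟪A (e i) (e l), A (e k) (e j)⟫ *
          frameInner e ((α.curryLeft (e i)).curryLeft (e k))
            ((α.curryLeft (e j)).curryLeft (e l)) := by
    have swap_both (k : ι) : ⟪A (e i) (e k), A (e j) (e k)⟫ = ⟪A (e k) (e i), A (e k) (e j)⟫ := by
      rw [hA (e i), hA (e j), inner_neg_neg]
    have swap_right (k l : ι) :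
        ⟪A (e i) (e l), A (e j) (e k)⟫ = -⟪A (e i) (e l), A (e k) (e j)⟫ := by
      rw [hA (e j), inner_neg_right]
    simp only [frameInner_wedgeOneForm, swap_both, swap_right, neg_mul, Finset.sum_neg_distrib,
      sub_neg_eq_add]
  rw [bPlus, LinearMap.map_sum₂]
  simp only [map_sum, inner_wedge, Finset.sum_add_distrib]
  congr 1
  exact Fintype.sum_congr _ _ fun i ↦ Finset.sum_comm

end FrameInner

lemma formInner_eq_frameInner {q p : ℕ} (e : Fin q → Q) (α β : Q [⋀^Fin p]→ₗ[ℝ] ℝ) :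
    formInner e α β = frameInner e α β := by
  simp [formInner, frameInner_apply, mul_comm]

theorem stmt5_general {q n : ℕ} (e : Fin q → Q)
    {L : Type*} [NormedAddCommGroup L] [InnerProductSpace ℝ L]
    (A : Q →ₗ[ℝ] Q →ₗ[ℝ] L) (hA : ∀ X Y : Q, A X Y = -A Y X)
    (α : AlternatingMap ℝ Q ℝ (Fin (n + 2))) :
    (1 / (Nat.factorial (n + 2) : ℝ)) * ∑ f : Fin (n + 2) → Fin q,
        ‖∑ i : Fin q, ∑ t : Fin (n + 2),
            ((-1 : ℝ) ^ (n + 1 - (t : ℕ)) * (iprod (e i) α) (e ∘ f ∘ t.succAbove)) •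
              A (e i) (e (f t))‖ ^ 2
      = (∑ i : Fin q, ∑ j : Fin q, ∑ k : Fin q,
            ⟪A (e k) (e i), A (e k) (e j)⟫ *
              formInner e (iprod (e i) α) (iprod (e j) α))
        + ∑ i : Fin q, ∑ j : Fin q, ∑ k : Fin q, ∑ l : Fin q,
            ⟪A (e i) (e l), A (e j) (e k)⟫ *
              formInner e (iprod (e j) (iprod (e i) α)) (iprod (e l) (iprod (e k) α)) := by
  have bPlus_frame (f : Fin (n + 2) → Fin q) :
      ∑ i, ∑ t : Fin (n + 2), ((-1 : ℝ) ^ (n + 1 - (t : ℕ)) *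
        (iprod (e i) α) (e ∘ f ∘ t.succAbove)) • A (e i) (e (f t)) = bPlus e A α (e ∘ f) :=
    (bPlus_apply e A α (e ∘ f)).symm
  simp only [bPlus_frame, formInner_eq_frameInner]
  rw [← frameInner_self]
  exact frameInner_bPlus_self e hA α

/-- For a `p`-form `α` with `2 ≤ p ≤ q` (here `p = n+2`) and the O'Neill tensor `A`, the
`L`-valued `p`-form `B⁺(α) = ∑_i (e_i⌟α) ∧ A_{e_i}`, i.e.
`B⁺(α)(X₁,…,X_p) = ∑_i ∑_{t=1}^p (−1)^{p−t}(e_i⌟α)(X₁,…,X̂_t,…,X_p)·A_{e_i}X_t`,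
satisfies `|B⁺(α)|² = ∑_{i,j,k}⟨A_{e_k}e_i,A_{e_k}e_j⟩⟨e_i⌟α,e_j⌟α⟩
 + ∑_{i,j,k,l}⟨A_{e_i}e_l,A_{e_j}e_k⟩⟨(e_j∧e_i)⌟α,(e_l∧e_k)⌟α⟩`,
where `|B⁺(α)|² = (1/p!)∑_{i₁,…,i_p}|B⁺(α)(e_{i₁},…,e_{i_p})|²`. -/
theorem stmt5 {q r n : ℕ} (hpq : n + 2 ≤ q)
    (e : OrthonormalBasis (Fin q) ℝ Q)
    {L : Type*} [NormedAddCommGroup L] [InnerProductSpace ℝ L]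
    (V : OrthonormalBasis (Fin r) ℝ L)
    (A : Q →ₗ[ℝ] Q →ₗ[ℝ] L) (hA : ∀ X Y : Q, A X Y = - A Y X)
    (α : AlternatingMap ℝ Q ℝ (Fin (n + 2))) :
    (1 / (Nat.factorial (n + 2) : ℝ)) * ∑ f : Fin (n + 2) → Fin q,
        ‖∑ i : Fin q, ∑ t : Fin (n + 2),
            ((-1 : ℝ) ^ (n + 1 - (t : ℕ)) * (iprod (e i) α) (⇑e ∘ f ∘ t.succAbove)) •
              A (e i) (e (f t))‖ ^ 2
      = (∑ i : Fin q, ∑ j : Fin q, ∑ k : Fin q,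
            ⟪A (e k) (e i), A (e k) (e j)⟫ *
              formInner ⇑e (iprod (e i) α) (iprod (e j) α))
        + ∑ i : Fin q, ∑ j : Fin q, ∑ k : Fin q, ∑ l : Fin q,
            ⟪A (e i) (e l), A (e j) (e k)⟫ *
              formInner ⇑e (iprod (e j) (iprod (e i) α)) (iprod (e l) (iprod (e k) α)) :=
  stmt5_general e A hA α
end

section
/- (Algebraic core of Proposition 3.1.) Let α be an alternating p-form on Q with 1 ≤ p ≤ q, and suppose that Σ_{i,j=1}^q Ric^∇_{ij}·⟨e_i⌟α, e_j⌟α⟩ − (1/2)·Σ_{i,j,k,l=1}^q R^∇_{ijkl}·⟨(e_j∧e_i)⌟α, (e_l∧e_k)⌟α⟩ = 0 (this vanishing holds for the transverse Weitzenböck curvature term when α is a parallel basic form of a Riemannian foliation). Then 0 ≤ −Σ_{i,j,l=1}^q R_{lilj}·⟨e_i⌟α, e_j⌟α⟩ + (1/2)·Σ_{i,j,k,l=1}^q R_{ijkl}·⟨(e_j∧e_i)⌟α, (e_l∧e_k)⌟α⟩ + Σ_{s=1}^r [ |(Σ_{i=1}^q A_{e_i}V_s ∧ e_i)⌟α|²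 − 2·Σ_{i=1}^q |A_{e_i}V_s ⌟ α|² ]. -/
open scoped BigOperators RealInnerProductSpace

variable {Q : Type*} [NormedAddCommGroup Q] [InnerProductSpace ℝ Q]

/-- O'Neill's formula for the transverse curvature:
`R^∇_{ijkl} = R_{ijkl} + 2⟨A_{e_i}e_j, A_{e_k}e_l⟩ − ⟨A_{e_j}e_k, A_{e_i}e_l⟩ − ⟨A_{e_k}e_i, A_{e_j}e_l⟩`. -/
noncomputable def Rnab {q : ℕ} {L : Type*} [NormedAddCommGroup L] [InnerProductSpace ℝ L]
    (e : Fin q → Q) (R : Fin q → Fin q → Fin q → Fin q → ℝ)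
    (A : Q →ₗ[ℝ] Q →ₗ[ℝ] L) (i j k l : Fin q) : ℝ :=
  R i j k l + 2 * ⟪A (e i) (e j), A (e k) (e l)⟫
    - ⟪A (e j) (e k), A (e i) (e l)⟫ - ⟪A (e k) (e i), A (e j) (e l)⟫

/-- O'Neill's formula for the transverse Ricci curvature:
`Ric^∇_{ij} = ∑_l (R_{lilj} + 2⟨A_{e_l}e_i, A_{e_l}e_j⟩ − ⟨A_{e_i}e_l, A_{e_l}e_j⟩)`. -/
noncomputable def Ricnab {q : ℕ} {L : Type*} [NormedAddCommGroup L] [InnerProductSpace ℝ L]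
    (e : Fin q → Q) (R : Fin q → Fin q → Fin q → Fin q → ℝ)
    (A : Q →ₗ[ℝ] Q →ₗ[ℝ] L) (i j : Fin q) : ℝ :=
  ∑ l : Fin q, (R l i l j + 2 * ⟪A (e l) (e i), A (e l) (e j)⟫
    - ⟪A (e i) (e l), A (e l) (e j)⟫)

/-!
For a linear family `φ` of forms,
`‖∑ e_i♭ ∧ φ(e_i)‖² = ∑ ‖φ(e_i)‖² - ∑ ⟨e_k ⌟ φ(e_i), e_i ⌟ φ(e_k)⟩`, so the double sum is at most
`∑ ‖φ(e_i)‖²`. The Weitzenböck curvature term is linear in the curvature tensor, and Parseval's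
identity in `L` writes `R^∇` as `R` plus one quadratic expression in `⟨A_{e_i}e_j, V_s⟩` for each
`s`. With `b_i = A_{e_i}V_s`, the Weitzenböck term of that expression is
`3 ∑ ‖b_i ⌟ α‖² - ‖∑ b_i ⌟ e_i ⌟ α‖² - ∑ ⟨e_k ⌟ b_i ⌟ α, e_i ⌟ b_k ⌟ α⟩`,
and the inequality applied to `φ(e_i) = b_i ⌟ α` absorbs the last sum into one of the three copies
of `∑ ‖b_i ⌟ α‖²`.
-/

open AlternatingMap Finset

section FormInner

variable {q p : ℕ} (e : Fin q → Q)

lemma formInner_comm (α β : Q [⋀^Fin p]→ₗ[ℝ] ℝ) : formInner e α β = formInner e β α := by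
  simp only [formInner, mul_comm]

lemma formInner_self_nonneg (α : Q [⋀^Fin p]→ₗ[ℝ] ℝ) : 0 ≤ formInner e α α :=
  mul_nonneg (by positivity) (sum_nonneg fun _ _ => mul_self_nonneg _)

lemma formInner_add_left (α α' β : Q [⋀^Fin p]→ₗ[ℝ] ℝ) :
    formInner e (α + α') β = formInner e α β + formInner e α' β := by
  simp only [formInner, AlternatingMap.add_apply, add_mul, sum_add_distrib, mul_add]

lemma formInner_smul_left (a : ℝ) (α β : Q [⋀^Fin p]→ₗ[ℝ] ℝ) :
    formInner e (a • α) β = a * formInner e α β := by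
  simp only [formInner, AlternatingMap.smul_apply, smul_eq_mul, mul_assoc, ← mul_sum]
  ring

/-- The inner product `formInner e` of `p`-forms, bundled as a bilinear form to give access to the
bilinearity lemmas for finite sums. -/
noncomputable def formInnerBilin : LinearMap.BilinForm ℝ (Q [⋀^Fin p]→ₗ[ℝ] ℝ) :=
  LinearMap.mk₂ ℝ (formInner e) (formInner_add_left e) (formInner_smul_left e)
    (fun α β β' => by simp only [formInner_comm e α, formInner_add_left])
    (fun a α β => by simp only [formInner_comm e α, formInner_smul_left, smul_eq_mul])

lemma formInnerBilin_apply (α β : Q [⋀^Fin p]→ₗ[ℝ] ℝ) :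
    formInnerBilin e α β = formInner e α β :=
  rfl

lemma formInner_comp {P : Type*} [NormedAddCommGroup P] [InnerProductSpace ℝ P] (T : P →ₗ[ℝ] Q)
    (e : Fin q → P) (α β : Q [⋀^Fin p]→ₗ[ℝ] ℝ) :
    formInner (T ∘ e) α β = formInner e (α.compLinearMap T) (β.compLinearMap T) :=
  rfl

end FormInner

section InteriorProduct

variable {p : ℕ}

lemma iprod_succ (X : Q) (α : Q [⋀^Fin (p + 1)]→ₗ[ℝ] ℝ) : iprod X α = α.curryLeft X :=
  rfl

lemma iprod_sum_smul {ι : Type*} [Fintype ι] (c : ι → ℝ) (X : ι → Q)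
    (α : Q [⋀^Fin p]→ₗ[ℝ] ℝ) :
    iprod (∑ i, c i • X i) α = ∑ i, c i • iprod (X i) α := by
  cases p with
  | zero => simp [iprod]
  | succ p => simp only [iprod_succ, map_sum, map_smul]

lemma iprod_compLinearMap {P : Type*} [NormedAddCommGroup P] [InnerProductSpace ℝ P]
    (T : P →ₗ[ℝ] Q) (X : P) (α : Q [⋀^Fin p]→ₗ[ℝ] ℝ) :
    iprod X (α.compLinearMap T) = (iprod (T X) α).compLinearMap T := by
  cases p with
  | zero => simp [iprod]
  | succ p => exact curryLeft_compLinearMap T α X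

lemma iprod_iprod_swap (X Y : Q) (α : Q [⋀^Fin p]→ₗ[ℝ] ℝ) :
    iprod X (iprod Y α) = -iprod Y (iprod X α) := by
  match p with
  | 0 => simp [iprod]
  | 1 => simp [iprod]
  | p + 2 =>
    have h := curryLeft_same α (X + Y)
    simp only [map_add, curryLeft_add, LinearMap.add_apply, curryLeft_same, zero_add,
      add_zero] at h
    exact eq_neg_of_add_eq_zero_left h

lemma formInner_iprod_sum_smul {q : ℕ} (e : Fin q → Q) (a b : Fin q → ℝ)
    (α β : Q [⋀^Fin p]→ₗ[ℝ] ℝ) :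
    formInner e (iprod (∑ j, a j • e j) α) (iprod (∑ l, b l • e l) β)
      = ∑ j, ∑ l, a j * b l * formInner e (iprod (e j) α) (iprod (e l) β) := by
  simp only [iprod_sum_smul, ← formInnerBilin_apply]
  rw [LinearMap.BilinForm.sum_left]
  simp only [LinearMap.BilinForm.sum_right, LinearMap.BilinForm.smul_left,
    LinearMap.BilinForm.smul_right, mul_assoc, mul_left_comm (b _)]

end InteriorProduct

section ExteriorProduct

lemma curryLeft_alternatizeUncurryFin_s9 {𝕜 M N : Type*} [CommRing 𝕜] [AddCommGroup M]
    [AddCommGroup N] [Module 𝕜 M] [Module 𝕜 N] {n : ℕ}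
    (φ : M →ₗ[𝕜] M [⋀^Fin (n + 1)]→ₗ[𝕜] N) (X : M) :
    (alternatizeUncurryFin φ).curryLeft X
      = φ X - alternatizeUncurryFin ((curryLeftLinearMap ∘ₗ φ).flip X) := by
  ext v
  have removeNth_succ_vecCons (m : Fin (n + 1)) :
      m.succ.removeNth (Matrix.vecCons X v) = Matrix.vecCons X (m.removeNth v) := by
    ext k
    refine Fin.cases ?_ (fun k => ?_) k <;> simp [Fin.removeNth]
  simp [alternatizeUncurryFin_apply, Fin.sum_univ_succ (n := n + 1), pow_succ,
    removeNth_succ_vecCons, sub_eq_add_neg]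

variable {q n : ℕ}

lemma formInner_alternatizeUncurryFin_left (e : Fin q → Q) (φ : Q →ₗ[ℝ] Q [⋀^Fin n]→ₗ[ℝ] ℝ)
    (β : Q [⋀^Fin (n + 1)]→ₗ[ℝ] ℝ) :
    formInner e (alternatizeUncurryFin φ) β
      = ∑ i, formInner e (φ (e i)) (iprod (e i) β) := by
  have slot (m : Fin (n + 1)) :
      ∑ f : Fin (n + 1) → Fin q,
          (-1) ^ (m : ℕ) • φ ((e ∘ f) m) (m.removeNth (e ∘ f)) * β (e ∘ f)
        = ∑ i, ∑ g : Fin n → Fin q, φ (e i) (e ∘ g) * β.curryLeft (e i) (e ∘ g) := by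
    rw [← (Fin.insertNthEquiv (fun _ => Fin q) m).sum_comp, Fintype.sum_prod_type]
    refine sum_congr rfl fun i _ => sum_congr rfl fun g _ => ?_
    have hcomp : e ∘ Fin.insertNthEquiv (fun _ => Fin q) m (i, g) = m.insertNth (e i) (e ∘ g) := by
      ext1 k
      refine m.succAboveCases ?_ (fun k => ?_) k <;> simp
    have hβ : β.curryLeft (e i) (e ∘ g) = (-1) ^ (m : ℕ) * β (m.insertNth (e i) (e ∘ g)) := by
      simpa using (neg_one_pow_smul_map_insertNth β m (e i) (e ∘ g)).symm
    rw [hcomp, hβ, Fin.insertNth_apply_same, Fin.removeNth_insertNth]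
    simp only [zsmul_eq_mul, Int.cast_pow, Int.cast_neg, Int.cast_one]
    ring
  simp only [formInner, alternatizeUncurryFin_apply, sum_mul]
  rw [sum_comm, sum_congr rfl fun m _ => slot m]
  simp only [sum_const, card_univ, Fintype.card_fin, nsmul_eq_mul, ← mul_sum, iprod_succ,
    ← mul_assoc]
  congr 1
  rw [Nat.factorial_succ]
  push_cast
  field_simp

lemma formInner_alternatizeUncurryFin_self (e : Fin q → Q) (φ : Q →ₗ[ℝ] Q [⋀^Fin n]→ₗ[ℝ] ℝ) :
    formInner e (alternatizeUncurryFin φ) (alternatizeUncurryFin φ)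
      = ∑ i, formInner e (φ (e i)) (φ (e i))
        - ∑ i, ∑ k, formInner e (iprod (e k) (φ (e i))) (iprod (e i) (φ (e k))) := by
  rw [formInner_alternatizeUncurryFin_left, ← sum_sub_distrib]
  refine sum_congr rfl fun i _ => ?_
  cases n with
  | zero =>
    have h : iprod (e i) (alternatizeUncurryFin φ) = φ (e i) := by
      ext v
      simp only [iprod_succ, curryLeft_apply_apply, alternatizeUncurryFin_apply]
      simp [Subsingleton.elim (α := Fin 0 → Q) _ v]
    rw [h]
    simp [iprod, formInner]
  | succ n =>
    rw [iprod_succ, curryLeft_alternatizeUncurryFin_s9, ← formInnerBilin_apply, map_sub,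
      formInnerBilin_apply, formInnerBilin_apply, formInner_comm e _ (alternatizeUncurryFin _),
      formInner_alternatizeUncurryFin_left]
    congr 1
    exact sum_congr rfl fun k _ => formInner_comm _ _ _

lemma sum_formInner_iprod_le (e : Fin q → Q) (φ : Fin q → Q [⋀^Fin n]→ₗ[ℝ] ℝ) :
    ∑ i, ∑ k, formInner e (iprod (e k) (φ i)) (iprod (e i) (φ k))
      ≤ ∑ i, formInner e (φ i) (φ i) := by
  -- Pulling back to `ℝ^q` makes the family `φ` extend to a linear map, whatever the vectors `e i`.
  let b := (EuclideanSpace.basisFun (Fin q) ℝ).toBasis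
  let T : EuclideanSpace ℝ (Fin q) →ₗ[ℝ] Q := b.constr ℝ e
  let ψ := b.constr ℝ fun i => (φ i).compLinearMap T
  have hT : T ∘ b = e := funext fun i => b.constr_basis ℝ e i
  have hψ (i : Fin q) : ψ (b i) = (φ i).compLinearMap T := b.constr_basis ℝ _ i
  have h := formInner_self_nonneg b (alternatizeUncurryFin ψ)
  rw [formInner_alternatizeUncurryFin_self] at h
  simp only [hψ, iprod_compLinearMap, ← formInner_comp] at h
  have hTb (i : Fin q) : T (b i) = e i := congrFun hT i
  simpa only [hT, hTb, sub_nonneg] using h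

end ExteriorProduct

section Weitzenboeck

variable {q p : ℕ}

/-- The Weitzenböck curvature term of a `p`-form `α` in the frame `e`, bundled as a linear map in
the curvature tensor so that it can be split over O'Neill's formula. The Ricci tensor of `R` is
taken to be `∑ l, R l i l j`. -/
noncomputable def weitzenboeck (e : Fin q → Q) (α : Q [⋀^Fin p]→ₗ[ℝ] ℝ) :
    (Fin q → Fin q → Fin q → Fin q → ℝ) →ₗ[ℝ] ℝ where
  toFun R := (∑ i, ∑ j, ∑ l, R l i l j * formInner e (iprod (e i) α) (iprod (e j) α))
    - (1 / 2 : ℝ) * ∑ i, ∑ j, ∑ k, ∑ l, R i j k l *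
        formInner e (iprod (e j) (iprod (e i) α)) (iprod (e l) (iprod (e k) α))
  map_add' R S := by
    simp only [Pi.add_apply, add_mul, sum_add_distrib]
    ring
  map_smul' a R := by
    simp only [Pi.smul_apply, smul_eq_mul, mul_assoc, ← mul_sum, RingHom.id_apply]
    ring

lemma weitzenboeck_apply (e : Fin q → Q) (α : Q [⋀^Fin p]→ₗ[ℝ] ℝ)
    (R : Fin q → Fin q → Fin q → Fin q → ℝ) :
    weitzenboeck e α R
      = (∑ i, ∑ j, ∑ l, R l i l j * formInner e (iprod (e i) α) (iprod (e j) α))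
        - (1 / 2 : ℝ) * ∑ i, ∑ j, ∑ k, ∑ l, R i j k l *
            formInner e (iprod (e j) (iprod (e i) α)) (iprod (e l) (iprod (e k) α)) :=
  rfl

/-- The correction `R^∇ - R` in O'Neill's formula contributed by a single component
`c i j = ⟨A_{e_i}e_j, V⟩` of the integrability tensor. -/
def oneillTensor (c : Fin q → Fin q → ℝ) (i j k l : Fin q) : ℝ :=
  2 * (c i j * c k l) - c j k * c i l - c k i * c j l

lemma sum_oneillTensor_contract_mul {c : Fin q → Fin q → ℝ} (hc : ∀ i j, c i j = -c j i)
    (G : Fin q → Fin q → ℝ) :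
    ∑ i, ∑ j, ∑ l, oneillTensor c l i l j * G i j
      = 3 * ∑ l, ∑ i, ∑ j, c l i * c l j * G i j := by
  rw [sum_comm_cycle]
  simp only [mul_sum]
  refine sum_congr rfl fun l _ => sum_congr rfl fun i _ => sum_congr rfl fun j _ => ?_
  have hll : c l l = 0 := self_eq_neg.mp (hc l l)
  rw [oneillTensor, hll, hc i l]
  ring

lemma sum_oneillTensor_mul {c : Fin q → Fin q → ℝ} (hc : ∀ i j, c i j = -c j i)
    {H : Fin q → Fin q → Fin q → Fin q → ℝ} (hH : ∀ i j k l, H i j k l = -H j i k l) :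
    ∑ i, ∑ j, ∑ k, ∑ l, oneillTensor c i j k l * H i j k l
      = 2 * ∑ i, ∑ j, ∑ k, ∑ l, c i j * c k l * H i j k l
        + 2 * ∑ i, ∑ k, ∑ j, ∑ l, c i j * c k l * H k j i l := by
  have second : ∑ i, ∑ j, ∑ k, ∑ l, c j k * c i l * H i j k l
      = -∑ i, ∑ k, ∑ j, ∑ l, c i j * c k l * H k j i l := by
    rw [sum_comm_cycle]
    simp only [← sum_neg_distrib]
    refine sum_congr rfl fun i _ => sum_congr rfl fun k _ => sum_congr rfl fun j _ =>
      sum_congr rfl fun l _ => ?_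
    rw [hc j i]
    ring
  have third : ∑ i, ∑ j, ∑ k, ∑ l, c k i * c j l * H i j k l
      = -∑ i, ∑ k, ∑ j, ∑ l, c i j * c k l * H k j i l := by
    rw [sum_comm, sum_comm_cycle]
    simp only [← sum_neg_distrib]
    refine sum_congr rfl fun i _ => sum_congr rfl fun k _ => sum_congr rfl fun j _ =>
      sum_congr rfl fun l _ => ?_
    rw [hH j k]
    ring
  simp only [oneillTensor, sub_mul, sum_sub_distrib, second, third]
  simp only [mul_assoc (2 : ℝ), ← mul_sum]
  ring

lemma weitzenboeck_oneillTensor (e : Fin q → Q) (α : Q [⋀^Fin p]→ₗ[ℝ] ℝ)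
    {c : Fin q → Fin q → ℝ} (hc : ∀ i j, c i j = -c j i) {b : Fin q → Q}
    (hb : ∀ i, b i = ∑ j, c i j • e j) :
    weitzenboeck e α (oneillTensor c)
      = 3 * ∑ i, formInner e (iprod (b i) α) (iprod (b i) α)
        - formInner e (∑ i, iprod (b i) (iprod (e i) α)) (∑ i, iprod (b i) (iprod (e i) α))
        - ∑ i, ∑ k, formInner e (iprod (e k) (iprod (b i) α)) (iprod (e i) (iprod (b k) α)) := by
  have hG (l : Fin q) : formInner e (iprod (b l) α) (iprod (b l) α)
      = ∑ i, ∑ j, c l i * c l j * formInner e (iprod (e i) α) (iprod (e j) α) := by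
    simp only [hb, formInner_iprod_sum_smul]
  have hH : formInner e (∑ i, iprod (b i) (iprod (e i) α)) (∑ k, iprod (b k) (iprod (e k) α))
      = ∑ i, ∑ j, ∑ k, ∑ l, c i j * c k l *
          formInner e (iprod (e j) (iprod (e i) α)) (iprod (e l) (iprod (e k) α)) := by
    rw [← formInnerBilin_apply, LinearMap.BilinForm.sum_left]
    simp only [LinearMap.BilinForm.sum_right, formInnerBilin_apply, hb, formInner_iprod_sum_smul]
    exact sum_congr rfl fun i _ => sum_comm
  have hcross (i k : Fin q) :
      formInner e (iprod (e k) (iprod (b i) α)) (iprod (e i) (iprod (b k) α))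
      = ∑ j, ∑ l, c i j * c k l *
          formInner e (iprod (e j) (iprod (e k) α)) (iprod (e l) (iprod (e i) α)) := by
    rw [iprod_iprod_swap (e k) (b i), iprod_iprod_swap (e i) (b k), ← formInnerBilin_apply,
      LinearMap.BilinForm.neg_left, LinearMap.BilinForm.neg_right, neg_neg, formInnerBilin_apply,
      hb, hb, formInner_iprod_sum_smul]
  have hswap (i j k l : Fin q) :
      formInner e (iprod (e j) (iprod (e i) α)) (iprod (e l) (iprod (e k) α))
        = -formInner e (iprod (e i) (iprod (e j) α)) (iprod (e l) (iprod (e k) α)) := by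
    rw [iprod_iprod_swap, ← formInnerBilin_apply, LinearMap.BilinForm.neg_left,
      formInnerBilin_apply]
  simp only [weitzenboeck_apply, hG, hH, hcross,
    sum_oneillTensor_contract_mul hc, sum_oneillTensor_mul hc hswap]
  ring

lemma le_weitzenboeck_oneillTensor (e : Fin q → Q) (α : Q [⋀^Fin p]→ₗ[ℝ] ℝ)
    {c : Fin q → Fin q → ℝ} (hc : ∀ i j, c i j = -c j i) {b : Fin q → Q}
    (hb : ∀ i, b i = ∑ j, c i j • e j) :
    2 * ∑ i, formInner e (iprod (b i) α) (iprod (b i) α)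
        - formInner e (∑ i, iprod (b i) (iprod (e i) α)) (∑ i, iprod (b i) (iprod (e i) α))
      ≤ weitzenboeck e α (oneillTensor c) := by
  rw [weitzenboeck_oneillTensor e α hc hb]
  linarith [sum_formInner_iprod_le e fun i => iprod (b i) α]

variable {ι L : Type*} [Fintype ι] [NormedAddCommGroup L] [InnerProductSpace ℝ L]

lemma Rnab_eq_add_sum_oneillTensor (e : Fin q → Q) (V : OrthonormalBasis ι ℝ L)
    (A : Q →ₗ[ℝ] Q →ₗ[ℝ] L) (R : Fin q → Fin q → Fin q → Fin q → ℝ) :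
    Rnab e R A = R + ∑ s, oneillTensor fun i j => ⟪A (e i) (e j), V s⟫ := by
  have parseval (x y : L) : ⟪x, y⟫ = ∑ s, ⟪x, V s⟫ * ⟪y, V s⟫ := by
    rw [← V.sum_inner_mul_inner x y]
    exact sum_congr rfl fun s _ => by rw [real_inner_comm y]
  funext i j k l
  rw [Rnab, parseval (A (e i) (e j)), parseval (A (e j) (e k)), parseval (A (e k) (e i))]
  simp only [oneillTensor, Pi.add_apply, Finset.sum_apply, sum_sub_distrib, mul_sum]
  ring

lemma Ricnab_eq_sum_Rnab (e : Fin q → Q) {A : Q →ₗ[ℝ] Q →ₗ[ℝ] L}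
    (hA : ∀ X Y : Q, A X Y = -A Y X) (R : Fin q → Fin q → Fin q → Fin q → ℝ) (i j : Fin q) :
    Ricnab e R A i j = ∑ l, Rnab e R A l i l j := by
  have hA_self (X : Q) : A X X = 0 := by
    have := IsAddTorsionFree.of_isTorsionFree ℝ L
    exact self_eq_neg.mp (hA X X)
  simp only [Ricnab, Rnab, hA_self, inner_zero_left, sub_zero]

lemma weitzenboeck_Rnab (e : Fin q → Q) {A : Q →ₗ[ℝ] Q →ₗ[ℝ] L}
    (hA : ∀ X Y : Q, A X Y = -A Y X) (R : Fin q → Fin q → Fin q → Fin q → ℝ)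
    (α : Q [⋀^Fin p]→ₗ[ℝ] ℝ) :
    weitzenboeck e α (Rnab e R A)
      = (∑ i, ∑ j, Ricnab e R A i j * formInner e (iprod (e i) α) (iprod (e j) α))
        - (1 / 2 : ℝ) * ∑ i, ∑ j, ∑ k, ∑ l, Rnab e R A i j k l *
            formInner e (iprod (e j) (iprod (e i) α)) (iprod (e l) (iprod (e k) α)) := by
  simp only [weitzenboeck_apply, Ricnab_eq_sum_Rnab e hA, sum_mul]

end Weitzenboeck

theorem stmt9_general {q p : ℕ} (e : Fin q → Q) {ι L : Type*} [Fintype ι]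
    [NormedAddCommGroup L] [InnerProductSpace ℝ L] (V : OrthonormalBasis ι ℝ L)
    (A : Q →ₗ[ℝ] Q →ₗ[ℝ] L) (hA : ∀ X Y : Q, A X Y = -A Y X)
    (R : Fin q → Fin q → Fin q → Fin q → ℝ) (α : Q [⋀^Fin p]→ₗ[ℝ] ℝ)
    (hnonpos : weitzenboeck e α (Rnab e R A) ≤ 0) :
    0 ≤ -weitzenboeck e α R + ∑ s,
      (formInner e
          (∑ i, iprod (∑ j, ⟪A (e i) (e j), V s⟫ • e j) (iprod (e i) α))
          (∑ i, iprod (∑ j, ⟪A (e i) (e j), V s⟫ • e j) (iprod (e i) α))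
        - 2 * ∑ i, formInner e
          (iprod (∑ j, ⟪A (e i) (e j), V s⟫ • e j) α)
          (iprod (∑ j, ⟪A (e i) (e j), V s⟫ • e j) α)) := by
  let c (s : ι) (i j : Fin q) : ℝ := ⟪A (e i) (e j), V s⟫
  have hc (s : ι) (i j : Fin q) : c s i j = -c s j i := by
    simp only [c]
    rw [hA, inner_neg_left]
  have hsplit : weitzenboeck e α (Rnab e R A)
      = weitzenboeck e α R + ∑ s, weitzenboeck e α (oneillTensor (c s)) := by
    rw [Rnab_eq_add_sum_oneillTensor e V, map_add, map_sum]
  have hle := sum_le_sum fun s (_ : s ∈ univ) =>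
    le_weitzenboeck_oneillTensor e α (hc s) fun _ => rfl
  simp only [sum_sub_distrib] at hle ⊢
  linarith

/-- Algebraic core of Proposition 3.1: if the transverse Weitzenböck curvature term
`∑_{i,j} Ric^∇_{ij}⟨e_i⌟α,e_j⌟α⟩ − (1/2)∑ R^∇_{ijkl}⟨(e_j∧e_i)⌟α,(e_l∧e_k)⌟α⟩` vanishes
(as it does for a parallel basic `p`-form), then
`0 ≤ −∑_{i,j,l} R_{lilj}⟨e_i⌟α,e_j⌟α⟩ + (1/2)∑_{i,j,k,l} R_{ijkl}⟨(e_j∧e_i)⌟α,(e_l∧e_k)⌟α⟩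
   + ∑_s ( |(∑_i A_{e_i}V_s∧e_i)⌟α|² − 2∑_i |A_{e_i}V_s⌟α|² )`. -/
theorem stmt9 {q r p : ℕ} (hp1 : 1 ≤ p) (hpq : p ≤ q)
    (e : OrthonormalBasis (Fin q) ℝ Q)
    {L : Type*} [NormedAddCommGroup L] [InnerProductSpace ℝ L]
    (V : OrthonormalBasis (Fin r) ℝ L)
    (A : Q →ₗ[ℝ] Q →ₗ[ℝ] L) (hA : ∀ X Y : Q, A X Y = - A Y X)
    (R : Fin q → Fin q → Fin q → Fin q → ℝ)
    (hR1 : ∀ i j k l, R i j k l = - R j i k l)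
    (hR2 : ∀ i j k l, R i j k l = - R i j l k)
    (hR3 : ∀ i j k l, R i j k l = R k l i j)
    (hBianchi : ∀ i j k l, R i j k l + R j k i l + R k i j l = 0)
    (α : AlternatingMap ℝ Q ℝ (Fin p))
    (hvanish :
      (∑ i : Fin q, ∑ j : Fin q,
          Ricnab ⇑e R A i j * formInner ⇑e (iprod (e i) α) (iprod (e j) α))
        - (1 / 2 : ℝ) * ∑ i : Fin q, ∑ j : Fin q, ∑ k : Fin q, ∑ l : Fin q,
            Rnab ⇑e R A i j k l *
              formInner ⇑e (iprod (e j) (iprod (e i) α)) (iprod (e l) (iprod (e k) α))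
        = 0) :
    0 ≤ -(∑ i : Fin q, ∑ j : Fin q, ∑ l : Fin q,
            R l i l j * formInner ⇑e (iprod (e i) α) (iprod (e j) α))
        + (1 / 2 : ℝ) * ∑ i : Fin q, ∑ j : Fin q, ∑ k : Fin q, ∑ l : Fin q,
            R i j k l *
              formInner ⇑e (iprod (e j) (iprod (e i) α)) (iprod (e l) (iprod (e k) α))
        + ∑ s : Fin r,
            (formInner ⇑e
                (∑ i : Fin q, iprod (∑ j : Fin q, ⟪A (e i) (e j), V s⟫ • e j) (iprod (e i) α))
                (∑ i : Fin q, iprod (∑ j : Fin q, ⟪A (e i) (e j), V s⟫ • e j) (iprod (e i) α))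
              - 2 * ∑ i : Fin q,
                  formInner ⇑e
                    (iprod (∑ j : Fin q, ⟪A (e i) (e j), V s⟫ • e j) α)
                    (iprod (∑ j : Fin q, ⟪A (e i) (e j), V s⟫ • e j) α)) := by
  simpa only [weitzenboeck_apply, neg_sub', sub_neg_eq_add] using
    stmt9_general e V A hA R α ((weitzenboeck_Rnab e hA R α).trans hvanish).le
end
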